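/- Let X be a finite non-degenerate indecomposable simple cycle set such that |X| is not a prime number. Then the displacement group Dis(X) acts transitively on X. -/

import Mathlib

/-!
Let `N` be a subgroup of `Sym(X)` that contains `Dis(X)` and satisfies `σ_x N σ_x⁻¹ ⊆ N` for all
`x`. All the `σ_x` induce one and the same map on the `N`-orbits, so the set of orbits is a trivial
cycle set and an epimorphic image of `X`. If `X` is simple, either there is only one orbit, so `N`
is transitive, or there are `|X|` orbits, so `N = 1` (`transitive_or_eq_bot`).

This applies to `N = Dis(X)`: by the cycle set equation `σ_{x·y} σ_x = σ_{y·x} σ_y`, the generator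
`σ_x σ_y⁻¹` equals `σ_{x·y}⁻¹ σ_{y·x}`, whose conjugate by any `σ_z` is a product of two generators
of `Dis(X)` (`conj_mem_Dis`).

If `Dis(X) = 1`, all `σ_x` equal one permutation `τ`, and `G(X) = ⟨τ⟩` is transitive. For a prime
`d` dividing the order `m` of `τ`, the same dichotomy applies to `N = ⟨τ^d⟩`. If `N` is transitive,
commutativity forces `τ ∈ N`, which is impossible as `N` has order `m / d`. If `N = 1`, then `m = d`
is prime, and so is `|X|`, which divides `m` and is not `1`
(`prime_card_of_Dis_eq_bot`). If `|X| ≤ 1`, the claim is clear.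
-/

/-- A cycle set: each left multiplication `σ_x = op x` is bijective and
`(x·y)·(x·z) = (y·x)·(y·z)`. -/
structure CycleSet (X : Type) where
  op : X → X → X
  bij : ∀ x, Function.Bijective (op x)
  cyc : ∀ x y z, op (op x y) (op x z) = op (op y x) (op y z)

namespace CycleSet

variable {X Y : Type}

/-- The left multiplication `σ_x` as a permutation of `X`. -/
noncomputable def sigma (C : CycleSet X) (x : X) : Equiv.Perm X :=
  Equiv.ofBijective _ (C.bij x)

/-- Non-degeneracy: the squaring map `x ↦ x·x` is bijective. -/
def Nondeg (C : CycleSet X) : Prop := Function.Bijective fun x => C.op x x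

/-- The associated permutation group `G(X)`, generated by the `σ_x`. -/
noncomputable def G (C : CycleSet X) : Subgroup (Equiv.Perm X) :=
  Subgroup.closure (Set.range C.sigma)

/-- The displacement group `Dis(X)`, generated by the `σ_x σ_y⁻¹`. -/
noncomputable def Dis (C : CycleSet X) : Subgroup (Equiv.Perm X) :=
  Subgroup.closure {g | ∃ x y, g = C.sigma x * (C.sigma y)⁻¹}

/-- A subgroup of `Sym(X)` acts transitively on `X`. -/
def SubgroupTransitive (H : Subgroup (Equiv.Perm X)) : Prop :=
  ∀ a b : X, ∃ g ∈ H, g a = b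

/-- Indecomposability: `G(X)` acts transitively on `X`. -/
def Indec (C : CycleSet X) : Prop := SubgroupTransitive C.G

/-- A trivial cycle set: all left multiplications coincide. -/
def IsTrivial (C : CycleSet X) : Prop := ∀ x y z, C.op x z = C.op y z

/-- Cycle set homomorphism. -/
def IsHom (C : CycleSet X) (D : CycleSet Y) (f : X → Y) : Prop :=
  ∀ a b : X, f (C.op a b) = D.op (f a) (f b)

/-- A block for the action of `G(X)` on `X`. -/
def IsBlock (C : CycleSet X) (s : Set X) : Prop :=
  ∀ g ∈ C.G, (⇑g '' s = s ∨ Disjoint (⇑g '' s) s)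

/-- Primitivity: `G(X)` acts transitively on `X` and all blocks are trivial. -/
def Primitive (C : CycleSet X) : Prop :=
  C.Indec ∧ ∀ s : Set X, C.IsBlock s → s.Subsingleton ∨ s = Set.univ

/-- There is a chain `X = X₁ → X₂ → ⋯ → X_k` of epimorphisms of cycle sets with
`|X_i| > |X_{i+1}| > 1` for `1 ≤ i ≤ k-1` and with `X_k` primitive. -/
def HasChain [Finite X] (C : CycleSet X) (k : ℕ) : Prop :=
  ∃ (T : ℕ → Type) (_ : ∀ i, Finite (T i)) (CS : ∀ i, CycleSet (T i)) (e : X → T 0),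
    Function.Bijective e ∧ IsHom C (CS 0) e ∧
    (∀ i, i + 1 < k → Nat.card (T (i + 1)) < Nat.card (T i) ∧ 1 < Nat.card (T (i + 1))) ∧
    (∀ i, i + 1 < k → ∃ p : T i → T (i + 1),
      Function.Surjective p ∧ IsHom (CS i) (CS (i + 1)) p) ∧
    (CS (k - 1)).Primitive

/-- `X` has finite primitive level: some chain as above exists (of positive length). -/
def HasFPL [Finite X] (C : CycleSet X) : Prop := ∃ k, 1 ≤ k ∧ HasChain C k

/-- `fpl(X) = k`: `k` is the largest positive integer admitting a chain as above. -/
def fplEq [Finite X] (C : CycleSet X) (k : ℕ) : Prop :=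
  1 ≤ k ∧ HasChain C k ∧ ∀ m, 1 ≤ m → HasChain C m → m ≤ k

end CycleSet

open CycleSet

/-- A simple cycle set: every epimorphic image is a singleton or isomorphic to `X`. -/
def IsSimpleCS {X : Type} [Finite X] (C : CycleSet X) : Prop :=
  ∀ (Y : Type) (D : CycleSet Y) (f : X → Y), Function.Surjective f → IsHom C D f →
    (Nat.card Y = 1 ∨ ∃ e : X → Y, Function.Bijective e ∧ IsHom C D e)

namespace CycleSet

variable {X : Type}

lemma sigma_apply (C : CycleSet X) (x y : X) : C.sigma x y = C.op x y := rfl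

lemma sigma_mul_inv_mem_Dis (C : CycleSet X) (x y : X) :
    C.sigma x * (C.sigma y)⁻¹ ∈ C.Dis :=
  Subgroup.subset_closure ⟨x, y, rfl⟩

/-- The cycle set equation as an identity of permutations. -/
lemma sigma_op_mul (C : CycleSet X) (x y : X) :
    C.sigma (C.op x y) * C.sigma x = C.sigma (C.op y x) * C.sigma y :=
  Equiv.ext fun z => C.cyc x y z

lemma conj_mem_Dis (C : CycleSet X) (z : X) (g : Equiv.Perm X) (hg : g ∈ C.Dis) :
    C.sigma z * g * (C.sigma z)⁻¹ ∈ C.Dis := by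
  suffices h : C.Dis ≤ C.Dis.comap (MulAut.conj (C.sigma z)).toMonoidHom from h hg
  refine (Subgroup.closure_le _).2 ?_
  rintro _ ⟨x, y, rfl⟩
  have key : C.sigma x * (C.sigma y)⁻¹
      = (C.sigma (C.op x y))⁻¹ * C.sigma (C.op y x) := by
    rw [mul_inv_eq_iff_eq_mul, mul_assoc, eq_inv_mul_iff_mul_eq, sigma_op_mul]
  have h : C.sigma z * (C.sigma x * (C.sigma y)⁻¹) * (C.sigma z)⁻¹ ∈ C.Dis := by
    have := mul_mem (C.sigma_mul_inv_mem_Dis z (C.op x y))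
      (C.sigma_mul_inv_mem_Dis (C.op y x) z)
    rw [key]
    simpa only [mul_assoc] using this
  exact h

lemma orbit_sigma_congr (C : CycleSet X) (N : Subgroup (Equiv.Perm X)) (hD : C.Dis ≤ N)
    (hN : ∀ x, ∀ g ∈ N, C.sigma x * g * (C.sigma x)⁻¹ ∈ N) (x y a b : X)
    (hab : MulAction.orbitRel N X a b) :
    MulAction.orbitRel N X (C.op x a) (C.op y b) := by
  obtain ⟨⟨g, hg⟩, rfl⟩ := hab
  refine ⟨⟨C.sigma x * g * (C.sigma x)⁻¹ * (C.sigma x * (C.sigma y)⁻¹),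
    mul_mem (hN x g hg) (hD (C.sigma_mul_inv_mem_Dis x y))⟩, ?_⟩
  simp [Subgroup.smul_def, ← sigma_apply]

/-- The trivial cycle set formed by the orbits of `N`, with `[x]·[a] = [x·a]`. -/
noncomputable def orbitCycleSet [Finite X] (C : CycleSet X) (N : Subgroup (Equiv.Perm X))
    (hD : C.Dis ≤ N) (hN : ∀ x, ∀ g ∈ N, C.sigma x * g * (C.sigma x)⁻¹ ∈ N) :
    CycleSet (Quotient (MulAction.orbitRel N X)) where
  op := Quotient.map₂ C.op fun x y _ a b hab => C.orbit_sigma_congr N hD hN x y a b hab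
  bij := by
    intro p
    induction p using Quotient.inductionOn with | h x => ?_
    refine Function.Surjective.bijective_of_finite fun q => ?_
    induction q using Quotient.inductionOn with | h b => ?_
    obtain ⟨a, rfl⟩ := (C.bij x).2 b
    exact ⟨⟦a⟧, rfl⟩
  cyc := by
    intro p q r
    induction p using Quotient.inductionOn with | h x => ?_
    induction q using Quotient.inductionOn with | h y => ?_
    induction r using Quotient.inductionOn with | h z => ?_
    exact congrArg (Quotient.mk _) (C.cyc x y z)

/-- Simplicity applied to the cycle set of `N`-orbits. -/
lemma transitive_or_eq_bot [Finite X] (C : CycleSet X) (hs : IsSimpleCS C)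
    (N : Subgroup (Equiv.Perm X)) (hD : C.Dis ≤ N)
    (hN : ∀ x, ∀ g ∈ N, C.sigma x * g * (C.sigma x)⁻¹ ∈ N) :
    SubgroupTransitive N ∨ N = ⊥ := by
  have hsurj : Function.Surjective (Quotient.mk (MulAction.orbitRel N X)) := Quotient.mk_surjective
  rcases hs _ (C.orbitCycleSet N hD hN) (Quotient.mk _) hsurj (fun _ _ => rfl) with h | ⟨e, he, -⟩
  · left
    intro a b
    have := (Nat.card_eq_one_iff_unique.1 h).1
    obtain ⟨⟨g, hg⟩, h⟩ := Quotient.exact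
      (Subsingleton.elim (Quotient.mk (MulAction.orbitRel N X) b) (Quotient.mk _ a))
    exact ⟨g, hg, h⟩
  · right
    -- the projection is a surjection between finite sets of the same size, hence injective
    have hinj : Function.Injective (Quotient.mk (MulAction.orbitRel N X)) :=
      (hsurj.bijective_of_nat_card_le (Nat.card_eq_of_bijective e he).le).1
    refine (Subgroup.eq_bot_iff_forall N).2 fun g hg => Equiv.ext fun a => hinj ?_
    exact Quotient.sound ⟨⟨g, hg⟩, rfl⟩

/-- If all left multiplications of a simple indecomposable cycle set coincide, that is, if its
displacement group is trivial, its cardinality is prime (unless it is `1`). -/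
lemma prime_card_of_Dis_eq_bot [Finite X] [Nontrivial X] (C : CycleSet X) (hind : C.Indec)
    (hs : IsSimpleCS C) (hD : C.Dis = ⊥) : (Nat.card X).Prime := by
  obtain ⟨x₀⟩ : Nonempty X := inferInstance
  obtain ⟨τ, hτ⟩ : ∃ τ, τ = C.sigma x₀ := ⟨_, rfl⟩
  have hσ : ∀ x, C.sigma x = τ := by
    intro x
    have h := C.sigma_mul_inv_mem_Dis x x₀
    rw [hD, Subgroup.mem_bot, mul_inv_eq_one] at h
    rw [h, hτ]
  have hG : C.G ≤ Subgroup.zpowers τ := by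
    refine (Subgroup.closure_le _).2 ?_
    rintro _ ⟨x, rfl⟩
    rw [hσ]
    exact Subgroup.mem_zpowers τ
  have htr : SubgroupTransitive (Subgroup.zpowers τ) := fun a b =>
    (hind a b).imp fun g hg => ⟨hG hg.1, hg.2⟩
  have hdvd : Nat.card X ∣ orderOf τ := by
    have : MulAction.IsPretransitive (Subgroup.zpowers τ) X :=
      ⟨fun a b => (htr a b).elim fun g hg => ⟨⟨g, hg.1⟩, hg.2⟩⟩
    rw [← MulAction.index_stabilizer_of_transitive (Subgroup.zpowers τ) x₀, ← Nat.card_zpowers]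
    exact Subgroup.index_dvd_card _
  have hpos : 0 < orderOf τ := orderOf_pos τ
  have hX : Nat.card X ≠ 1 := Finite.one_lt_card.ne'
  have hm : orderOf τ ≠ 1 := fun h => hX (Nat.dvd_one.1 (h ▸ hdvd))
  obtain ⟨d, hd, hdm⟩ := Nat.exists_prime_and_dvd hm
  have hN : ∀ x, ∀ g ∈ Subgroup.zpowers (τ ^ d),
      C.sigma x * g * (C.sigma x)⁻¹ ∈ Subgroup.zpowers (τ ^ d) := by
    rintro x _ ⟨k, rfl⟩
    have hc : Commute τ ((τ ^ d) ^ k) := ((Commute.refl τ).pow_right d).zpow_right k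
    simp only [hσ]
    rw [hc.eq, mul_inv_cancel_right]
    exact ⟨k, rfl⟩
  rcases C.transitive_or_eq_bot hs (Subgroup.zpowers (τ ^ d)) (hD ▸ bot_le) hN with h | h
  · exfalso
    -- `τ` agrees at `x₀` with some `g ∈ ⟨τ^d⟩`, hence everywhere, as both commute with `⟨τ⟩`
    obtain ⟨_, ⟨k, rfl⟩, hk⟩ := h x₀ (τ x₀)
    simp only at hk
    have hτk : τ = (τ ^ d) ^ k := by
      ext y
      obtain ⟨_, ⟨l, rfl⟩, rfl⟩ := htr x₀ y
      have h1 : Commute τ (τ ^ l) := (Commute.refl τ).zpow_right l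
      have h2 : Commute ((τ ^ d) ^ k) (τ ^ l) := (h1.pow_left d).zpow_left k
      simp only
      rw [← Equiv.Perm.mul_apply, ← Equiv.Perm.mul_apply, h1.eq, h2.eq, Equiv.Perm.mul_apply,
        Equiv.Perm.mul_apply, hk]
    have hmd : orderOf τ ∣ orderOf (τ ^ d) :=
      orderOf_dvd_of_mem_zpowers ⟨k, hτk.symm⟩
    rw [orderOf_pow_of_dvd hd.ne_zero hdm] at hmd
    exact absurd (Nat.le_of_dvd (Nat.div_pos (Nat.le_of_dvd hpos hdm) hd.pos) hmd)
      (Nat.div_lt_self hpos hd.one_lt).not_ge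
  · rw [Subgroup.zpowers_eq_bot] at h
    have := hdvd.trans (orderOf_dvd_of_pow_eq_one h)
    rwa [((Nat.dvd_prime hd).1 this).resolve_left hX]

end CycleSet

theorem statement_3 {X : Type} [Finite X] (C : CycleSet X)
    (hnd : C.Nondeg) (hind : C.Indec) (hsimple : IsSimpleCS C)
    (hnp : ¬ (Nat.card X).Prime) :
    SubgroupTransitive C.Dis := by
  rcases subsingleton_or_nontrivial X with _ | _
  · exact fun a b => ⟨1, one_mem _, Subsingleton.elim _ _⟩
  · exact (C.transitive_or_eq_bot hsimple C.Dis le_rfl C.conj_mem_Dis).resolve_right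
      fun h => hnp (C.prime_card_of_Dis_eq_bot hind hsimple h)
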